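/- Given a recollement (S, T, U), a Serre functor F on T with quasi-inverse F', the composite functor j^* ∘ F' ∘ j_* : U → U is a left Serre functor on U. -/

import Mathlib

/-!
Setting: `k` a field; `S`, `T`, `U` skeletally small `k`-linear triangulated categories
with finite-dimensional Hom-spaces, `T` with split idempotents.  A recollement
`(S, T, U)` as in [BBD], and (right/left) Serre functors in the sense of
Reiten–Van den Bergh.
-/

open CategoryTheory CategoryTheory.Limits CategoryTheory.Pretriangulated

universe v₁ v₂ v₃ u₁ u₂ u₃ u₄

/-- A right Serre structure on an endofunctor `F` of a `k`-linear category `C`: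
isomorphisms `C(X, Y) ≅ C(Y, F X)^∨`, natural in `X` and `Y`.
A right Serre functor is a functor `F` equipped with such a structure. -/
structure RightSerreStructure (k : Type u₄) [Field k] (C : Type u₁) [Category.{v₁} C]
    [Preadditive C] [CategoryTheory.Linear k C] (F : C ⥤ C) where
  equiv : ∀ X Y : C, (X ⟶ Y) ≃ₗ[k] Module.Dual k (Y ⟶ F.obj X)
  naturality_left : ∀ {X X' Y : C} (f : X' ⟶ X) (φ : X ⟶ Y) (u : Y ⟶ F.obj X'),
    equiv X' Y (f ≫ φ) u = equiv X Y φ (u ≫ F.map f)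
  naturality_right : ∀ {X Y Y' : C} (φ : X ⟶ Y) (g : Y ⟶ Y') (u : Y' ⟶ F.obj X),
    equiv X Y' (φ ≫ g) u = equiv X Y φ (g ≫ u)

/-- A left Serre structure on an endofunctor `F'` of a `k`-linear category `C`:
isomorphisms `C(X, Y) ≅ C(F' Y, X)^∨`, natural in `X` and `Y`.
A left Serre functor is a functor `F'` equipped with such a structure. -/
structure LeftSerreStructure (k : Type u₄) [Field k] (C : Type u₁) [Category.{v₁} C]
    [Preadditive C] [CategoryTheory.Linear k C] (F' : C ⥤ C) where
  equiv : ∀ X Y : C, (X ⟶ Y) ≃ₗ[k] Module.Dual k (F'.obj Y ⟶ X)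
  naturality_left : ∀ {X X' Y : C} (f : X' ⟶ X) (φ : X ⟶ Y) (u : F'.obj Y ⟶ X'),
    equiv X' Y (f ≫ φ) u = equiv X Y φ (u ≫ f)
  naturality_right : ∀ {X Y Y' : C} (φ : X ⟶ Y) (g : Y ⟶ Y') (u : F'.obj Y' ⟶ X),
    equiv X Y' (φ ≫ g) u = equiv X Y φ (F'.map g ≫ u)

/-- A Serre functor: an essentially surjective right Serre functor. -/
structure SerreFunctor (k : Type u₄) [Field k] (C : Type u₁) [Category.{v₁} C]
    [Preadditive C] [CategoryTheory.Linear k C] where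
  F : C ⥤ C
  rightSerre : RightSerreStructure k C F
  essSurj : F.EssSurj

/-- A recollement of triangulated categories `(S, T, U)`:
triangulated functors `i_* = iSt : S ⥤ T`, `i^* = iUp, i^! = iSh : T ⥤ S`,
`j^* = jUp : T ⥤ U`, `j_! = jLo, j_* = jSt : U ⥤ T` with the adjunctions,
vanishing, full faithfulness and distinguished-triangle conditions of [BBD, sec. 1.4]. -/
structure Recollement (S : Type u₁) (T : Type u₂) (U : Type u₃)
    [Category.{v₁} S] [Category.{v₂} T] [Category.{v₃} U]
    [HasZeroObject S] [HasZeroObject T] [HasZeroObject U]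
    [Preadditive S] [Preadditive T] [Preadditive U]
    [HasShift S ℤ] [HasShift T ℤ] [HasShift U ℤ]
    [∀ n : ℤ, (shiftFunctor S n).Additive] [∀ n : ℤ, (shiftFunctor T n).Additive]
    [∀ n : ℤ, (shiftFunctor U n).Additive]
    [Pretriangulated S] [Pretriangulated T] [Pretriangulated U] where
  /-- `i_* : S ⥤ T` -/
  iSt : S ⥤ T
  /-- `i^* : T ⥤ S` -/
  iUp : T ⥤ S
  /-- `i^! : T ⥤ S` -/
  iSh : T ⥤ S
  /-- `j^* : T ⥤ U` -/
  jUp : T ⥤ U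
  /-- `j_! : U ⥤ T` -/
  jLo : U ⥤ T
  /-- `j_* : U ⥤ T` -/
  jSt : U ⥤ T
  [commShift_iSt : iSt.CommShift ℤ]
  [commShift_iUp : iUp.CommShift ℤ]
  [commShift_iSh : iSh.CommShift ℤ]
  [commShift_jUp : jUp.CommShift ℤ]
  [commShift_jLo : jLo.CommShift ℤ]
  [commShift_jSt : jSt.CommShift ℤ]
  [isTriangulated_iSt : iSt.IsTriangulated]
  [isTriangulated_iUp : iUp.IsTriangulated]
  [isTriangulated_iSh : iSh.IsTriangulated]
  [isTriangulated_jUp : jUp.IsTriangulated]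
  [isTriangulated_jLo : jLo.IsTriangulated]
  [isTriangulated_jSt : jSt.IsTriangulated]
  /-- `(i^*, i_*)` is an adjoint pair. -/
  adj₁ : iUp ⊣ iSt
  /-- `(i_*, i^!)` is an adjoint pair. -/
  adj₂ : iSt ⊣ iSh
  /-- `(j_!, j^*)` is an adjoint pair. -/
  adj₃ : jLo ⊣ jUp
  /-- `(j^*, j_*)` is an adjoint pair. -/
  adj₄ : jUp ⊣ jSt
  /-- `j^* ∘ i_* = 0`. -/
  zero_comp : ∀ X : S, IsZero (jUp.obj (iSt.obj X))
  fullyFaithful_iSt : iSt.FullyFaithful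
  fullyFaithful_jLo : jLo.FullyFaithful
  fullyFaithful_jSt : jSt.FullyFaithful
  /-- The distinguished triangle `i_* i^! X ⟶ X ⟶ j_* j^* X ⟶`, whose morphisms into and
  out of `X` are the counit of `(i_*, i^!)` and the unit of `(j^*, j_*)`. -/
  triangle_a : ∀ X : T, ∃ δ : jSt.obj (jUp.obj X) ⟶ (iSt.obj (iSh.obj X))⟦(1 : ℤ)⟧,
    Triangle.mk (adj₂.counit.app X) (adj₄.unit.app X) δ ∈ distTriang T
  /-- The distinguished triangle `j_! j^* X ⟶ X ⟶ i_* i^* X ⟶`, whose morphisms into and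
  out of `X` are the counit of `(j_!, j^*)` and the unit of `(i^*, i_*)`. -/
  triangle_b : ∀ X : T, ∃ δ : iSt.obj (iUp.obj X) ⟶ (jLo.obj (jUp.obj X))⟦(1 : ℤ)⟧,
    Triangle.mk (adj₃.counit.app X) (adj₁.unit.app X) δ ∈ distTriang T

/-!
The functor `j_*` embeds `U` reflectively into `T`, and `F'` is a left Serre functor on `T`, so
`U(X, Y) ≅ T(j_* X, j_* Y) ≅ T(F' j_* Y, j_* X)^∨ ≅ U(j^* F' j_* Y, X)^∨`.
Here the duals, and the linearity of these isomorphisms, refer to the `k`-structure that `U`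
inherits from `T` along `j_*`. Since `j_*` is only assumed to be additive, this may differ from the
given `k`-structure on `U`.

It remains to compare the duals for two linear structures, over `k₁` and `k₂`, on the same
category. Both come from its center `Z`, and `Hom_{kᵢ}(M, kᵢ) ≅ Hom_Z(M, Hom_{kᵢ}(Z, kᵢ))` for every
`Z`-module `M`. The group `Hom_{k₁}(Z, k₁)` is a `k₂`-vector space through `Z`. Choose a `k₂`-linear
form on it that is nonzero on its `m`-torsion, whenever this is nonzero, for every maximal ideal `m`
of `Z`. It induces a `Z`-linear map `Hom_{k₁}(Z, k₁) → Hom_{k₂}(Z, k₂)` which is injective on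
finite-dimensional submodules. This yields natural injections
`Hom_{k₁}(M, k₁) → Hom_{k₂}(M, k₂)` for all finite-dimensional `M`. There are also injections in the
opposite direction, so both are bijective.
-/

section Contragredient

/-- The contragredient action: a commutative ring `A` acting on a `k`-module acts on its dual by
precomposition. It is a local instance of low priority, since for `A = k` the dual already has a
(propositionally equal) module structure. -/
abbrev contragredientModule (k A M : Type*) [CommSemiring k] [CommSemiring A] [AddCommMonoid M]
    [Module k M] [Module A M] [SMulCommClass A k M] : Module A (Module.Dual k M) where
  smul a l := l ∘ₗ DistribSMul.toLinearMap k M a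
  one_smul l := LinearMap.ext fun x ↦ congrArg l (one_smul A x)
  mul_smul a b l := LinearMap.ext fun x ↦ congrArg l (by simp [mul_comm a b, mul_smul])
  smul_zero _ := rfl
  smul_add _ _ _ := rfl
  add_smul a b l := LinearMap.ext fun x ↦ by
    change l ((a + b) • x) = l (a • x) + l (b • x)
    rw [add_smul, map_add]
  zero_smul l := LinearMap.ext fun x ↦ by
    change l ((0 : A) • x) = 0
    rw [zero_smul, map_zero]

attribute [local instance 50] contragredientModule

section Coinduction

variable {k Z M : Type*} [CommSemiring k] [CommSemiring Z] [Algebra k Z]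
  [AddCommMonoid M] [Module k M] [Module Z M] [IsScalarTower k Z M]

lemma contragredient_smul_apply (z : Z) (l : Module.Dual k M) (x : M) : (z • l) x = l (z • x) :=
  rfl

lemma isScalarTower_contragredient : IsScalarTower k Z (Module.Dual k M) where
  smul_assoc a z l := LinearMap.ext fun x ↦ by
    simp [contragredient_smul_apply]

attribute [local instance] isScalarTower_contragredient

variable (k Z M) in
/-- Coinduction: `k`-linear functionals on a `Z`-module `M` are the `Z`-linear maps from `M` to the
`k`-dual of `Z`. The functional `l` corresponds to the map sending `x` to its matrix coefficient
`z ↦ l (z • x)`. -/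
def dualEquivHomDual : Module.Dual k M ≃ₗ[Z] (M →ₗ[Z] Module.Dual k Z) where
  toFun l :=
    { toFun x := l ∘ₗ (LinearMap.toSpanSingleton Z M x).restrictScalars k
      map_add' x y := by ext; simp
      map_smul' z x := by ext; simp [contragredient_smul_apply, mul_smul, smul_comm z] }
  map_add' _ _ := rfl
  map_smul' z l := by ext x w; simp [contragredient_smul_apply, mul_smul, smul_comm z]
  invFun c :=
    { toFun x := c x 1
      map_add' := by simp
      map_smul' a x := by
        rw [← algebraMap_smul Z a x, map_smul, algebraMap_smul]; simp }
  left_inv l := by ext; simp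
  right_inv c := by ext x z; simp [contragredient_smul_apply]

lemma dualEquivHomDual_apply (l : Module.Dual k M) (x : M) (z : Z) :
    dualEquivHomDual k Z M l x z = l (z • x) := rfl

end Coinduction

attribute [local instance] isScalarTower_contragredient

section Socle

lemma iSupIndep_torsionBySet_maximalSpectrum (Z E : Type*) [CommRing Z] [AddCommGroup E]
    [Module Z E] :
    iSupIndep fun m : MaximalSpectrum Z ↦ Submodule.torsionBySet Z E m.asIdeal :=
  iSupIndep_iff_supIndep.2 fun _ ↦ Submodule.supIndep_torsionBySet_ideal fun m _ m' _ h ↦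
    m.isMaximal.coprime_of_ne m'.isMaximal fun he ↦ h (MaximalSpectrum.ext he)

lemma iSupIndep_restrictScalars {k Z E ι : Type*} [Semiring k] [Semiring Z] [AddCommMonoid E]
    [Module k E] [Module Z E] [SMul k Z] [IsScalarTower k Z E] {p : ι → Submodule Z E}
    (hp : iSupIndep p) : iSupIndep fun i ↦ (p i).restrictScalars k := fun i ↦ by
  simpa only [← Submodule.restrictScalars_iSup, Submodule.disjoint_restrictScalars_iff] using hp i

lemma exists_dual_forall_maximalSpectrum (k Z E : Type*) [Field k] [CommRing Z] [AddCommGroup E]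
    [Module k E] [Module Z E] [SMul k Z] [IsScalarTower k Z E] :
    ∃ s : Module.Dual k E, ∀ m : MaximalSpectrum Z, Submodule.torsionBySet Z E m.asIdeal ≠ ⊥ →
      ∃ v ∈ Submodule.torsionBySet Z E m.asIdeal, s v ≠ 0 := by
  have hindep := iSupIndep_restrictScalars (k := k) (iSupIndep_torsionBySet_maximalSpectrum Z E)
  choose! v hv hv0 using fun (m : MaximalSpectrum Z)
    (hm : Submodule.torsionBySet Z E m.asIdeal ≠ ⊥) ↦ Submodule.exists_mem_ne_zero_of_ne_bot hm
  have hli : LinearIndepOn k v {m | Submodule.torsionBySet Z E m.asIdeal ≠ ⊥} :=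
    (hindep.comp Subtype.val_injective).linearIndependent _ (fun m ↦ hv m m.2) fun m ↦ hv0 m m.2
  obtain ⟨s, hs⟩ := Module.exists_dual_forall_apply_eq_one hli
  exact ⟨s, fun m hm ↦ ⟨v m, hv m hm, by simp [hs m hm]⟩⟩

lemma finite_span_singleton_of_mem {k Z E : Type*} [DivisionRing k] [Ring Z] [AddCommGroup E]
    [Module Z E] [Module k E] [SMul k Z] [IsScalarTower k Z E] {p : Submodule Z E}
    [Module.Finite k p] {x : E} (hx : x ∈ p) : Module.Finite k (Submodule.span Z {x}) :=
  have hle : Submodule.span Z {x} ≤ p := (Submodule.span_singleton_le_iff_mem x p).2 hx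
  Module.Finite.of_injective ((Submodule.inclusion hle).restrictScalars k)
    (Submodule.inclusion_injective hle)

lemma exists_mem_span_singleton_torsionOf_isMaximal (k : Type*) {Z E : Type*} [DivisionRing k]
    [CommRing Z] [AddCommGroup E] [Module Z E] [Module k E] [SMul k Z] [IsScalarTower k Z E] {x : E}
    [Module.Finite k (Submodule.span Z {x})] (hx : x ≠ 0) :
    ∃ y ∈ Submodule.span Z {x}, y ≠ 0 ∧ (Ideal.torsionOf Z E y).IsMaximal := by
  have : IsArtinian Z (Submodule.span Z {x}) := isArtinian_of_tower k inferInstance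
  have : Nontrivial (Submodule.span Z {x}) :=
    (Submodule.nontrivial_iff_ne_bot).2 (by simpa using hx)
  obtain ⟨A, hA⟩ := IsAtomic.exists_atom (Submodule Z (Submodule.span Z {x}))
  have : IsSimpleModule Z A := isSimpleModule_iff_isAtom.2 hA
  obtain ⟨y, hyA, hy⟩ := Submodule.exists_mem_ne_zero_of_ne_bot hA.1
  have hmax := IsSimpleModule.ker_toSpanSingleton_isMaximal Z (m := (⟨y, hyA⟩ : A)) (by simpa)
  have hker : Ideal.torsionOf Z E y = LinearMap.ker (LinearMap.toSpanSingleton Z A ⟨y, hyA⟩) := by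
    ext z; simp [Ideal.mem_torsionOf_iff, Subtype.ext_iff]
  exact ⟨y, y.2, by simpa using hy, hker ▸ hmax⟩

variable {k Z : Type*} [Field k] [CommRing Z] [Algebra k Z]

-- A finite-dimensional subspace of a dual space is the annihilator of its coannihilator, and the
-- coannihilator of the orbit `Z ∙ l` is the annihilator ideal of `l`.
lemma torsionBySet_torsionOf_le_span_singleton (l : Module.Dual k Z)
    [Module.Finite k (Submodule.span Z {l})] :
    Submodule.torsionBySet Z (Module.Dual k Z) (Ideal.torsionOf Z (Module.Dual k Z) l) ≤
      Submodule.span Z {l} := by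
  intro f hf
  have : FiniteDimensional k ((Submodule.span Z {l}).restrictScalars k) := ‹_›
  rw [← Submodule.restrictScalars_mem k, ← Subspace.dualCoannihilator_dualAnnihilator_eq
    (W := (Submodule.span Z {l}).restrictScalars k), Submodule.mem_dualAnnihilator]
  intro w hw
  have hwl : w • l = 0 := LinearMap.ext fun z ↦ by
    have := (Submodule.mem_dualCoannihilator _).1 hw (z • l)
      (Submodule.mem_span_singleton.2 ⟨z, rfl⟩)
    simpa [contragredient_smul_apply, mul_comm] using this
  have hwf : w • f = 0 := (Submodule.mem_torsionBySet_iff _ _).1 hf ⟨w, hwl⟩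
  simpa [contragredient_smul_apply] using LinearMap.congr_fun hwf 1

end Socle

section Comparison

lemma exists_hom_dual_injective_of_finite (k₁ k₂ Z : Type*) [Field k₁] [Field k₂] [CommRing Z]
    [Algebra k₁ Z] [Algebra k₂ Z] :
    ∃ θ : Module.Dual k₁ Z →ₗ[Z] Module.Dual k₂ Z, ∀ l : Module.Dual k₁ Z,
      Module.Finite k₁ (Submodule.span Z {l}) → θ l = 0 → l = 0 := by
  let : Module k₂ (Module.Dual k₁ Z) := Module.compHom _ (algebraMap k₂ Z)
  have : IsScalarTower k₂ Z (Module.Dual k₁ Z) := .of_algebraMap_smul fun _ _ ↦ rfl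
  obtain ⟨s, hs⟩ := exists_dual_forall_maximalSpectrum k₂ Z (Module.Dual k₁ Z)
  refine ⟨dualEquivHomDual k₂ Z _ s, fun l hl hθ ↦ ?_⟩
  by_contra hl0
  obtain ⟨y, hyl, hy0, hmax⟩ := exists_mem_span_singleton_torsionOf_isMaximal k₁ (Z := Z) hl0
  have : Module.Finite k₁ (Submodule.span Z {y}) := finite_span_singleton_of_mem hyl
  have hy : y ∈ Submodule.torsionBySet Z (Module.Dual k₁ Z) (Ideal.torsionOf Z _ y) :=
    (Submodule.mem_torsionBySet_iff _ _).2 fun z ↦ z.2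
  obtain ⟨v, hv, hsv⟩ := hs ⟨_, hmax⟩ fun h ↦ hy0 ((Submodule.mem_bot Z).1 (h ▸ hy))
  have hvl : v ∈ Submodule.span Z {l} := (Submodule.span_singleton_le_iff_mem y _).2 hyl
    (torsionBySet_torsionOf_le_span_singleton y hv)
  obtain ⟨z, rfl⟩ := Submodule.mem_span_singleton.1 hvl
  exact hsv (LinearMap.congr_fun hθ z)

variable {k₁ k₂ Z : Type*} [Field k₁] [Field k₂] [CommRing Z] [Algebra k₁ Z] [Algebra k₂ Z]
variable {M N : Type*} [AddCommGroup M] [Module Z M] [AddCommGroup N] [Module Z N]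
  [Module k₁ M] [Module k₂ M] [IsScalarTower k₁ Z M] [IsScalarTower k₂ Z M]
  [Module k₁ N] [Module k₂ N] [IsScalarTower k₁ Z N] [IsScalarTower k₂ Z N]

variable (M) in
/-- The comparison of the `k₁`-dual and the `k₂`-dual of `M` induced by a `Z`-linear map between the
duals of `Z`, through coinduction. -/
def dualComparison (θ : Module.Dual k₁ Z →ₗ[Z] Module.Dual k₂ Z) :
    Module.Dual k₁ M →ₗ[Z] Module.Dual k₂ M :=
  (dualEquivHomDual k₂ Z M).symm.toLinearMap ∘ₗ LinearMap.compRight Z θ ∘ₗ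
    (dualEquivHomDual k₁ Z M).toLinearMap

lemma dualComparison_comp (θ : Module.Dual k₁ Z →ₗ[Z] Module.Dual k₂ Z) (l : Module.Dual k₁ N)
    (l' : Module.Dual k₁ M) (h : M →ₗ[Z] N) (hl : ∀ x, l' x = l (h x)) (x : M) :
    dualComparison M θ l' x = dualComparison N θ l (h x) := by
  have : dualEquivHomDual k₁ Z M l' x = dualEquivHomDual k₁ Z N l (h x) := by
    ext z; simp [dualEquivHomDual_apply, hl]
  exact congrArg (fun c ↦ θ c 1) this

lemma dualComparison_injective [Module.Finite k₁ M] {θ : Module.Dual k₁ Z →ₗ[Z] Module.Dual k₂ Z}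
    (hθ : ∀ l : Module.Dual k₁ Z, Module.Finite k₁ (Submodule.span Z {l}) → θ l = 0 → l = 0) :
    Function.Injective (dualComparison M θ) := by
  rw [injective_iff_map_eq_zero]
  intro l hl
  have hc : θ ∘ₗ dualEquivHomDual k₁ Z M l = 0 :=
    (dualEquivHomDual k₂ Z M).symm.map_eq_zero_iff.1 hl
  refine (dualEquivHomDual k₁ Z M).map_eq_zero_iff.1 (LinearMap.ext fun x ↦ ?_)
  have : Module.Finite k₁ (LinearMap.range (dualEquivHomDual k₁ Z M l)) :=
    Module.Finite.range ((dualEquivHomDual k₁ Z M l).restrictScalars k₁)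
  exact hθ _ (finite_span_singleton_of_mem (LinearMap.mem_range_self _ x))
    (LinearMap.congr_fun hc x)

variable (k₁ k₂ Z) in
lemma exists_forall_bijective_dualComparison :
    ∃ θ : Module.Dual k₁ Z →ₗ[Z] Module.Dual k₂ Z,
      ∀ (M : Type*) [AddCommGroup M] [Module Z M] [Module k₁ M] [Module k₂ M]
        [IsScalarTower k₁ Z M] [IsScalarTower k₂ Z M] [Module.Finite k₁ M] [Module.Finite k₂ M],
        Function.Bijective (dualComparison M θ) := by
  obtain ⟨θ, hθ⟩ := exists_hom_dual_injective_of_finite k₁ k₂ Z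
  obtain ⟨θ', hθ'⟩ := exists_hom_dual_injective_of_finite k₂ k₁ Z
  refine ⟨θ, fun M ↦ ?_⟩
  intros
  have hinj : Function.Injective (dualComparison M θ) := dualComparison_injective hθ
  have : IsArtinian Z (Module.Dual k₂ M) := isArtinian_of_tower k₂ inferInstance
  have hsurj := IsArtinian.surjective_of_injective_endomorphism
    (dualComparison M θ ∘ₗ dualComparison M θ') (hinj.comp (dualComparison_injective hθ'))
  exact ⟨hinj, Function.Surjective.of_comp hsurj⟩

end Comparison

section ChangeOfStructure

variable {k₁ k₂ Z C : Type*} [Field k₁] [Field k₂] [CommRing Z] [Category* C] [Preadditive C]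
  [Linear k₁ C] [Linear k₂ C] [Linear Z C] {G : C ⥤ C}

lemma LeftSerreStructure.equiv_smul [Algebra k₁ Z] [∀ X Y : C, IsScalarTower k₁ Z (X ⟶ Y)]
    (h : LeftSerreStructure k₁ C G) {X Y : C} (z : Z) (φ : X ⟶ Y) :
    h.equiv X Y (z • φ) = z • h.equiv X Y φ := by
  ext u
  simpa [contragredient_smul_apply] using h.naturality_left (z • 𝟙 X) φ u

/-- The `Z`-linear form of the duality isomorphism of a left Serre structure. -/
def LeftSerreStructure.linearEquivOfTower [Algebra k₁ Z] [∀ X Y : C, IsScalarTower k₁ Z (X ⟶ Y)]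
    (h : LeftSerreStructure k₁ C G) (X Y : C) : (X ⟶ Y) ≃ₗ[Z] Module.Dual k₁ (G.obj Y ⟶ X) :=
  { (h.equiv X Y).toAddEquiv with map_smul' := h.equiv_smul }

theorem LeftSerreStructure.nonempty_changeLinear_of_isScalarTower [Algebra k₁ Z] [Algebra k₂ Z]
    [∀ X Y : C, IsScalarTower k₁ Z (X ⟶ Y)] [∀ X Y : C, IsScalarTower k₂ Z (X ⟶ Y)]
    [∀ X Y : C, Module.Finite k₁ (X ⟶ Y)] [∀ X Y : C, Module.Finite k₂ (X ⟶ Y)]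
    (h : LeftSerreStructure k₁ C G) : Nonempty (LeftSerreStructure k₂ C G) := by
  obtain ⟨θ, hθ⟩ := exists_forall_bijective_dualComparison k₁ k₂ Z
  let e (X Y : C) : (X ⟶ Y) ≃ₗ[Z] Module.Dual k₂ (G.obj Y ⟶ X) :=
    h.linearEquivOfTower X Y ≪≫ₗ LinearEquiv.ofBijective (dualComparison _ θ) (hθ _)
  exact ⟨{
    equiv X Y := (e X Y).restrictScalars k₂
    naturality_left f φ u := dualComparison_comp θ _ _ (Linear.rightComp Z _ f)
      (h.naturality_left f φ) u
    naturality_right φ g u := dualComparison_comp θ _ _ (Linear.leftComp Z _ (G.map g))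
      (h.naturality_right φ g) u }⟩

end ChangeOfStructure

end Contragredient

section Center

open scoped IsMulCommutative

/-- The linear structure of a preadditive category over its center, which extends Mathlib's scalar
action of the center on morphisms. -/
abbrev linearCatCenter (C : Type*) [Category* C] [Preadditive C] : Linear (CatCenter C) C where
  homModule X Y :=
    { one_smul f := Category.comp_id f
      mul_smul z w f := by simp [CatCenter.smul_eq]
      smul_zero z := zero_comp
      zero_smul f := comp_zero
      smul_add z f g := Preadditive.add_comp _ _ _ f g _
      add_smul z w f := Preadditive.comp_add _ _ _ f _ _ }
  smul_comp X Y Z z f g := by simp [CatCenter.smul_eq']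
  comp_smul X Y Z f z g := by simp [CatCenter.smul_eq]

/-- The center of a `k`-linear category is a `k`-algebra. -/
abbrev algebraCatCenter (k C : Type*) [CommRing k] [Category* C] [Preadditive C] [Linear k C] :
    Algebra k (CatCenter C) :=
  (Linear.toCatCenter k C).toAlgebra

attribute [local instance] linearCatCenter algebraCatCenter

lemma isScalarTower_catCenter_hom (k : Type*) {C : Type*} [CommRing k] [Category* C] [Preadditive C]
    [Linear k C] (X Y : C) : IsScalarTower k (CatCenter C) (X ⟶ Y) :=
  .of_algebraMap_smul fun a f ↦ by
    change f ≫ (a • 𝟙 Y) = a • f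
    simp

attribute [local instance] isScalarTower_catCenter_hom

theorem LeftSerreStructure.nonempty_changeLinear {k₁ k₂ C : Type*} [Field k₁] [Field k₂]
    [Category* C] [Preadditive C] [Linear k₁ C] [Linear k₂ C] {G : C ⥤ C}
    [∀ X Y : C, Module.Finite k₁ (X ⟶ Y)] [∀ X Y : C, Module.Finite k₂ (X ⟶ Y)]
    (h : LeftSerreStructure k₁ C G) : Nonempty (LeftSerreStructure k₂ C G) :=
  h.nonempty_changeLinear_of_isScalarTower (Z := CatCenter C)

end Center

section Transport

variable {C D : Type*} [Category* C] [Preadditive C] [Category* D] [Preadditive D]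

/-- A right Serre structure on `F` induces a left Serre structure on a right inverse `F'` of `F`,
through `C(X, Y) ≅ C(X, Y)^∨^∨ ≅ C(X, F (F' Y))^∨^∨ ≅ C(F' Y, X)^∨`. -/
noncomputable def RightSerreStructure.leftSerreStructure {k : Type*} [Field k]
    [Linear k C] [∀ X Y : C, Module.Finite k (X ⟶ Y)]
    {F F' : C ⥤ C} (h : RightSerreStructure k C F) (ε : F' ⋙ F ≅ 𝟭 C) :
    LeftSerreStructure k C F' where
  equiv X Y :=
    Module.evalEquiv k (X ⟶ Y) ≪≫ₗ
      (h.equiv (F'.obj Y) X ≪≫ₗ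
        (Linear.homCongr k (Iso.refl X) (ε.app Y)).symm.dualMap).dualMap
  naturality_left f φ u := by
    simp [h.naturality_right, Linear.homCongr_symm_apply]
  naturality_right φ g u := by
    have hε : g ≫ ε.inv.app _ = ε.inv.app _ ≫ F.map (F'.map g) := ε.inv.naturality g
    simp [h.naturality_left, Linear.homCongr_symm_apply, hε]

section HomEquiv

variable (R : Type*) [Semiring R] [Linear R C] [Linear R D] {L : C ⥤ D} {j : D ⥤ C} [j.Additive]
  [j.Linear R]

/-- The hom-set bijection of an adjunction with `R`-linear right adjoint, as an `R`-linear
equivalence. -/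
def homLinearEquivOfAdjunction (adj : L ⊣ j) (A : C) (X : D) :
    (L.obj A ⟶ X) ≃ₗ[R] (A ⟶ j.obj X) :=
  { adj.homEquiv A X with
    map_add' f g := by simp [adj.homEquiv_unit]
    map_smul' a f := by simp [adj.homEquiv_unit] }

/-- The bijection on hom-sets given by a fully faithful `R`-linear functor, as an `R`-linear
equivalence. -/
def homLinearEquivOfFullyFaithful (hj : j.FullyFaithful) (X Y : D) :
    (X ⟶ Y) ≃ₗ[R] (j.obj X ⟶ j.obj Y) :=
  { j.mapLinearMap R, hj.homEquiv with }

end HomEquiv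

/-- Left Serre structures restrict along a reflective embedding `j` with reflector `L`, through
`D(X, Y) ≅ C(j X, j Y) ≅ C(F' (j Y), j X)^∨ ≅ D(L (F' (j Y)), X)^∨`. -/
def LeftSerreStructure.ofReflective {k : Type*} [Field k] [Linear k C] [Linear k D] {L : C ⥤ D}
    {j : D ⥤ C} [j.Additive] [j.Linear k] {F' : C ⥤ C} (h : LeftSerreStructure k C F')
    (adj : L ⊣ j) (hj : j.FullyFaithful) : LeftSerreStructure k D (j ⋙ F' ⋙ L) where
  equiv X Y :=
    homLinearEquivOfFullyFaithful k hj X Y ≪≫ₗ h.equiv (j.obj X) (j.obj Y) ≪≫ₗ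
      (homLinearEquivOfAdjunction k adj _ X).dualMap
  naturality_left f φ u := by
    simp [homLinearEquivOfAdjunction, homLinearEquivOfFullyFaithful,
      adj.homEquiv_naturality_right, h.naturality_left]
  naturality_right φ g u := by
    simp [homLinearEquivOfAdjunction, homLinearEquivOfFullyFaithful,
      adj.homEquiv_naturality_left, h.naturality_right]

section Pullback

variable (R : Type*) [Semiring R] [Linear R C] {j : D ⥤ C} [j.Additive] (hj : j.FullyFaithful)

/-- The `R`-linear structure that makes a fully faithful additive functor `R`-linear. -/
abbrev linearOfFullyFaithful : Linear R D where
  homModule X Y :=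
    AddEquiv.module R ({ j.mapAddHom, hj.homEquiv with } : (X ⟶ Y) ≃+ (j.obj X ⟶ j.obj Y))
  smul_comp X Y Z a f g := hj.map_injective <| by
    simp [Equiv.smul_def]
  comp_smul X Y Z f a g := hj.map_injective <| by
    simp [Equiv.smul_def]

lemma linear_linearOfFullyFaithful : letI := linearOfFullyFaithful R hj; j.Linear R :=
  letI := linearOfFullyFaithful R hj
  { map_smul f a := by simp [Equiv.smul_def] }

lemma finite_hom_linearOfFullyFaithful [∀ X Y : C, Module.Finite R (X ⟶ Y)] (X Y : D) :
    letI := linearOfFullyFaithful R hj; Module.Finite R (X ⟶ Y) :=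
  letI := linearOfFullyFaithful R hj
  haveI := linear_linearOfFullyFaithful R hj
  Module.Finite.equiv (homLinearEquivOfFullyFaithful R hj X Y).symm

end Pullback

end Transport

theorem recollement_left_serre_structure_on_U_general {k₁ k₂ C D : Type*} [Field k₁] [Field k₂]
    [Category* C] [Preadditive C] [Linear k₁ C] [∀ X Y : C, Module.Finite k₁ (X ⟶ Y)]
    [Category* D] [Preadditive D] [Linear k₂ D] [∀ X Y : D, Module.Finite k₂ (X ⟶ Y)]
    {L : C ⥤ D} {j : D ⥤ C} [j.Additive] (adj : L ⊣ j) (hj : j.FullyFaithful) {F F' : C ⥤ C}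
    (h : RightSerreStructure k₁ C F) (ε : F' ⋙ F ≅ 𝟭 C) :
    Nonempty (LeftSerreStructure k₂ D (j ⋙ F' ⋙ L)) :=
  let := linearOfFullyFaithful k₁ hj
  have := linear_linearOfFullyFaithful k₁ hj
  have := finite_hom_linearOfFullyFaithful k₁ hj
  ((h.leftSerreStructure ε).ofReflective adj hj).nonempty_changeLinear

/-- Given a recollement `(S, T, U)` and a Serre functor `F` on `T` with quasi-inverse `F'`,
the composite functor `j^* ∘ F' ∘ j_* : U ⥤ U` is a left Serre functor on `U`. -/
theorem recollement_left_serre_structure_on_U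
    {k : Type u₄} [Field k]
    {S : Type u₁} {T : Type u₂} {U : Type u₃}
    [Category.{v₁} S] [Category.{v₂} T] [Category.{v₃} U]
    [HasZeroObject S] [HasZeroObject T] [HasZeroObject U]
    [Preadditive S] [Preadditive T] [Preadditive U]
    [CategoryTheory.Linear k S] [CategoryTheory.Linear k T] [CategoryTheory.Linear k U]
    [HasShift S ℤ] [HasShift T ℤ] [HasShift U ℤ]
    [∀ n : ℤ, (shiftFunctor S n).Additive] [∀ n : ℤ, (shiftFunctor T n).Additive]
    [∀ n : ℤ, (shiftFunctor U n).Additive]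
    [Pretriangulated S] [Pretriangulated T] [Pretriangulated U]
    [EssentiallySmall.{v₁} S] [EssentiallySmall.{v₂} T] [EssentiallySmall.{v₃} U]
    [∀ X Y : S, FiniteDimensional k (X ⟶ Y)]
    [∀ X Y : T, FiniteDimensional k (X ⟶ Y)]
    [∀ X Y : U, FiniteDimensional k (X ⟶ Y)]
    [IsIdempotentComplete T]
    (R : Recollement S T U)
    (SF : SerreFunctor k T) (F' : T ⥤ T)
    (η : SF.F ⋙ F' ≅ 𝟭 T) (ε : F' ⋙ SF.F ≅ 𝟭 T) :
    Nonempty (LeftSerreStructure k U (R.jSt ⋙ F' ⋙ R.jUp)) := by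
  have : R.jSt.Additive :=
    letI := R.commShift_jSt
    have := R.isTriangulated_jSt
    inferInstance
  exact recollement_left_serre_structure_on_U_general R.adj₄ R.fullyFaithful_jSt SF.rightSerre ε
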